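/- arXiv:2301.09699 — 2 statements merged into one kernel-verified Lean document; each statement's English description precedes it below -/
import Mathlib

section
/- For each nonnegative integer k, the series a_k = ∑_{n=0}^∞ (-1)^n · s(n,k) · L_n(1)/n! converges (with the convention s(n,k) = 0 for k > n), and for every real x > 0 the power series ∑_{k=0}^∞ a_k x^k converges with sum equal to 1/Γ(x+1), where Γ is the real Gamma function. -/
/-- The value of the `n`-th Laguerre polynomial at `1`:
`L_n(1) = ∑_{k=0}^n C(n,k) (-1)^k / k!`. -/
noncomputable def laguerreOne (n : ℕ) : ℝ :=
  ∑ k ∈ Finset.range (n + 1), (Nat.choose n k : ℝ) * (-1) ^ k / (Nat.factorial k : ℝ)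

/-- The signed Stirling numbers of the first kind, defined by
`x (x-1) ⋯ (x-n+1) = ∑_{k=0}^n s(n,k) x^k`, with `s(n,k) = 0` for `k > n`. -/
noncomputable def stirlingFirst (n k : ℕ) : ℝ :=
  (((descPochhammer ℤ n).coeff k : ℤ) : ℝ)

open Filter MeasureTheory Polynomial Set Topology

/-!
For `‖z‖ < 1 / 2` and `t > 0` put `G(t) = ∑ (-1) ^ n * C(z + 1, n) * L_n(t)`. Abel summation,
based on Pascal's rule and `t * L_(n+1)' = (n + 1) * (L_(n+1) - L_n)`, shows that
`t * G' = (z + 1) * G`, so `G` is a multiple of `t ^ (z + 1)`. Under the Laplace transform `L_n`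
becomes `(1 - 1 / s) ^ n / s` and the series for `G` a binomial series, which identifies the
multiple as `1 / Γ(z + 2)`. Hence `G'(t) = t ^ z / Γ(z + 1)`, and since `L_(n+1)' - L_n' = -L_n`,
a second Abel summation rewrites `G'` as the Newton series `∑ (-1) ^ n * C(z, n) * L_n(t)`. The
bounds `(n + 1) ^ (‖z‖ - 1)` for the binomial coefficients and `O(√n)` for `L_n'(t)` make this
convergence uniform on `‖z‖ ≤ r < 1 / 2`.

The partial sums of the Newton series are polynomials in `z`, and their coefficients are the
partial sums defining `a_k` (with `L_n(t)` for `L_n(1)`). By Weierstrass' theorem they converge to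
the Taylor coefficients at `0` of `t ^ z / Γ(z + 1)`, which is entire and so equal to its Taylor
series.
-/

section Laguerre

/-- The `n`-th Laguerre polynomial `L_n`, given by its explicit coefficients. -/
noncomputable def laguerre (n : ℕ) : ℝ[X] :=
  ∑ k ∈ Finset.range (n + 1), C ((n.choose k : ℝ) * (-1) ^ k / k.factorial) * X ^ k

lemma coeff_laguerre (n k : ℕ) :
    (laguerre n).coeff k = (n.choose k : ℝ) * (-1) ^ k / k.factorial := by
  simp only [laguerre, finsetSum_coeff, coeff_C_mul_X_pow, Finset.sum_ite_eq, Finset.mem_range]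
  split_ifs with hk
  · rfl
  · simp [Nat.choose_eq_zero_of_lt (by lia : n < k)]

lemma laguerre_zero : laguerre 0 = 1 := by
  simp [laguerre]

lemma eval_zero_laguerre (n : ℕ) : (laguerre n).eval 0 = 1 := by
  simp [← coeff_zero_eq_eval_zero, coeff_laguerre]

lemma eval_one_laguerre (n : ℕ) : (laguerre n).eval 1 = laguerreOne n := by
  simp [laguerre, laguerreOne, eval_finsetSum]

lemma derivative_laguerre_succ (n : ℕ) :
    derivative (laguerre (n + 1)) = derivative (laguerre n) - laguerre n := by
  ext k
  have hk : (k.factorial : ℝ) ≠ 0 := by positivity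
  simp only [coeff_sub, coeff_derivative, coeff_laguerre, Nat.choose_succ_succ, Nat.factorial_succ]
  push_cast
  field_simp
  ring

lemma X_mul_derivative_laguerre_succ (n : ℕ) :
    X * derivative (laguerre (n + 1)) = (n + 1 : ℝ[X]) * (laguerre (n + 1) - laguerre n) := by
  ext k
  rw [show (n + 1 : ℝ[X]) = C (n + 1 : ℝ) by simp, coeff_C_mul]
  cases k with
  | zero => simp [coeff_laguerre]
  | succ k =>
    have hchoose : ((n : ℝ) + 1) * n.choose k = (n.choose k + n.choose (k + 1)) * (k + 1) := by
      exact_mod_cast Nat.choose_succ_succ n k ▸ Nat.add_one_mul_choose_eq n k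
    have hk : ((k + 1).factorial : ℝ) ≠ 0 := by positivity
    simp only [coeff_X_mul, coeff_derivative, coeff_sub, coeff_laguerre, Nat.choose_succ_succ]
    push_cast
    field_simp
    linear_combination -hchoose

lemma laguerre_differential_equation (n : ℕ) :
    X * derivative (derivative (laguerre n)) =
      (X - 1) * derivative (laguerre n) - (n : ℝ[X]) * laguerre n := by
  cases n with
  | zero => simp [laguerre_zero]
  | succ n =>
    have h := congrArg derivative (X_mul_derivative_laguerre_succ n)
    simp only [derivative_mul, derivative_X, derivative_sub, derivative_add, derivative_natCast,
      derivative_one] at h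
    push_cast
    linear_combination h + (n + 1 : ℝ[X]) * derivative_laguerre_succ n -
      X_mul_derivative_laguerre_succ n

-- By the differential equation the energy `E = n * L_n ^ 2 + t * L_n' ^ 2` has
-- `E' = (2 * t - 1) * L_n' ^ 2 ≤ 2 * E`, so `exp (-2 * t) * E` decreases.
lemma laguerre_energy_le (n : ℕ) {t : ℝ} (ht : 0 ≤ t) :
    n * (laguerre n).eval t ^ 2 + t * (derivative (laguerre n)).eval t ^ 2 ≤
      n * Real.exp t ^ 2 := by
  set E : ℝ → ℝ := fun s ↦
    n * (laguerre n).eval s ^ 2 + s * (derivative (laguerre n)).eval s ^ 2 with hE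
  have hderiv (s : ℝ) : HasDerivAt (fun s ↦ Real.exp (-2 * s) * E s) (Real.exp (-2 * s) *
      (-2 * n * (laguerre n).eval s ^ 2 - (derivative (laguerre n)).eval s ^ 2)) s := by
    have hexp : HasDerivAt (fun s : ℝ ↦ Real.exp (-2 * s)) (Real.exp (-2 * s) * (-2 * 1)) s :=
      ((hasDerivAt_id s).const_mul (-2)).exp
    have hode := congrArg (eval s) (laguerre_differential_equation n)
    simp only [eval_mul, eval_sub, eval_X, eval_one, eval_natCast] at hode
    refine (hexp.mul ((((laguerre n).hasDerivAt s).pow 2 |>.const_mul (n : ℝ)).add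
      ((hasDerivAt_id s).mul ((derivative (laguerre n)).hasDerivAt s |>.pow 2)))).congr_deriv ?_
    simp only [id, Pi.add_apply, Pi.mul_apply, Pi.pow_apply]
    linear_combination Real.exp (-2 * s) * 2 * (derivative (laguerre n)).eval s * hode
  have hanti : Antitone fun s ↦ Real.exp (-2 * s) * E s := by
    refine antitone_of_hasDerivAt_nonpos hderiv fun s ↦ ?_
    have h₁ : 0 ≤ (n : ℝ) * (laguerre n).eval s ^ 2 := by positivity
    have h₂ := sq_nonneg ((derivative (laguerre n)).eval s)
    exact mul_nonpos_of_nonneg_of_nonpos (Real.exp_pos _).le (by linarith)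
  have hE₀ : Real.exp (-2 * t) * E t ≤ n := by
    simpa [hE, eval_zero_laguerre] using hanti ht
  have hexp : Real.exp (-2 * t) = (Real.exp t ^ 2)⁻¹ := by
    rw [neg_mul, Real.exp_neg, two_mul, Real.exp_add, sq]
  rwa [hexp, inv_mul_le_iff₀ (by positivity), mul_comm] at hE₀

lemma abs_eval_laguerre_le (n : ℕ) {t : ℝ} (ht : 0 ≤ t) : |(laguerre n).eval t| ≤ Real.exp t := by
  rcases n.eq_zero_or_pos with rfl | hn
  · simp [laguerre_zero, ht]
  · refine abs_le_of_sq_le_sq (le_of_mul_le_mul_left ?_ (Nat.cast_pos.2 hn)) (Real.exp_pos t).le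
    exact (le_add_of_nonneg_right (by positivity)).trans (laguerre_energy_le n ht)

lemma abs_eval_derivative_laguerre_le (n : ℕ) {t : ℝ} (ht : 0 < t) :
    |(derivative (laguerre n)).eval t| ≤ √(n / t) * Real.exp t := by
  refine abs_le_of_sq_le_sq ?_ (by positivity)
  rw [mul_pow, Real.sq_sqrt (by positivity), div_mul_eq_mul_div, le_div_iff₀ ht, mul_comm]
  exact (le_add_of_nonneg_left (by positivity)).trans (laguerre_energy_le n ht.le)

lemma integrableOn_pow_mul_exp_neg_mul (k : ℕ) {s : ℝ} (hs : 0 < s) :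
    IntegrableOn (fun t : ℝ ↦ t ^ k * Real.exp (-(s * t))) (Ioi 0) := by
  simpa using integrableOn_rpow_mul_exp_neg_mul_rpow (s := k) (p := 1)
    (by linarith [k.cast_nonneg (α := ℝ)]) one_pos hs

lemma integral_pow_mul_exp_neg_mul (k : ℕ) {s : ℝ} (hs : 0 < s) :
    ∫ t in Ioi (0 : ℝ), t ^ k * Real.exp (-(s * t)) = k.factorial / s ^ (k + 1) := by
  have h := Real.integral_rpow_mul_exp_neg_mul_Ioi (a := k + 1) (by positivity) hs
  rw [Real.Gamma_nat_eq_factorial] at h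
  simp only [add_sub_cancel_right, Real.rpow_natCast] at h
  rw [h, ← Nat.cast_succ, Real.rpow_natCast, one_div, inv_pow, inv_mul_eq_div]

lemma eval_laguerre_mul (n : ℕ) (t c : ℝ) : (laguerre n).eval t * c =
    ∑ k ∈ Finset.range (n + 1), ((n.choose k : ℝ) * (-1) ^ k / k.factorial) * (t ^ k * c) := by
  simp [laguerre, eval_finsetSum, Finset.sum_mul, mul_assoc]

lemma integrableOn_laguerre_mul_exp_neg_mul (n : ℕ) {s : ℝ} (hs : 0 < s) :
    IntegrableOn (fun t ↦ (laguerre n).eval t * Real.exp (-(s * t))) (Ioi 0) := by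
  simp_rw [eval_laguerre_mul]
  exact integrable_finsetSum _ fun k _ ↦ (integrableOn_pow_mul_exp_neg_mul k hs).const_mul _

lemma integral_laguerre_mul_exp_neg_mul (n : ℕ) {s : ℝ} (hs : 0 < s) :
    ∫ t in Ioi (0 : ℝ), (laguerre n).eval t * Real.exp (-(s * t)) = (1 - 1 / s) ^ n / s := by
  simp_rw [eval_laguerre_mul]
  rw [integral_finsetSum _ fun k _ ↦ (integrableOn_pow_mul_exp_neg_mul k hs).const_mul _,
    sub_eq_neg_add, add_pow, Finset.sum_div]
  refine Finset.sum_congr rfl fun k _ ↦ ?_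
  have hk : (k.factorial : ℝ) ≠ 0 := by positivity
  rw [integral_const_mul, integral_pow_mul_exp_neg_mul k hs, neg_pow (1 / s), one_div_pow]
  field_simp
  ring

lemma integral_norm_laguerre_mul_exp_neg_mul_le (n : ℕ) {s : ℝ} (hs : 1 < s) :
    ∫ t in Ioi (0 : ℝ), ‖(laguerre n).eval t * Real.exp (-(s * t))‖ ≤ 1 / (s - 1) := by
  have hs' : 0 < s - 1 := sub_pos.2 hs
  have hexp : IntegrableOn (fun t ↦ Real.exp (-((s - 1) * t))) (Ioi 0) := by
    simpa using integrableOn_pow_mul_exp_neg_mul 0 hs'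
  calc ∫ t in Ioi (0 : ℝ), ‖(laguerre n).eval t * Real.exp (-(s * t))‖
      ≤ ∫ t in Ioi (0 : ℝ), Real.exp (-((s - 1) * t)) := by
        refine setIntegral_mono_on
          (integrableOn_laguerre_mul_exp_neg_mul n (one_pos.trans hs)).norm hexp
          measurableSet_Ioi fun t ht ↦ ?_
        rw [norm_mul, Real.norm_eq_abs, Real.norm_eq_abs, Real.abs_exp,
          show -((s - 1) * t) = t + -(s * t) by ring, Real.exp_add]
        gcongr
        exact abs_eval_laguerre_le n (mem_Ioi.1 ht).le
    _ = 1 / (s - 1) := by simpa using integral_pow_mul_exp_neg_mul 0 hs'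

end Laguerre

section AltChoose

/-- The signed binomial coefficient `(-1) ^ n * C(z, n)`, the coefficient of `w ^ n` in the binomial
series of `(1 - w) ^ z` and, as a polynomial in `z`, the `n`-th basis polynomial (up to sign)
of Newton series. -/
noncomputable def altChoose {R : Type*} [CommRing R] [BinomialRing R] (z : R) (n : ℕ) : R :=
  (-1) ^ n * Ring.choose z n

section Ring

variable {R : Type*} [CommRing R] [BinomialRing R]

lemma altChoose_zero_right (z : R) : altChoose z 0 = 1 := by
  simp [altChoose]

lemma add_one_mul_altChoose_succ (z : R) (n : ℕ) :
    ((n : R) + 1) * altChoose z (n + 1) = (n - z) * altChoose z n := by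
  have h := Ring.choose_smul_choose z n.le_succ
  simp only [Nat.succ_eq_add_one, Nat.choose_succ_self_right, add_tsub_cancel_left,
    Ring.choose_one_right, nsmul_eq_mul, Nat.cast_add, Nat.cast_one] at h
  simp only [altChoose]
  linear_combination (-1) ^ (n + 1) * h

lemma altChoose_add_one_succ (z : R) (n : ℕ) :
    altChoose (z + 1) (n + 1) = altChoose z (n + 1) - altChoose z n := by
  simp only [altChoose, Ring.choose_succ_succ]
  ring

lemma add_one_mul_altChoose_add_one_succ (z : R) (n : ℕ) :
    ((n : R) + 1) * altChoose (z + 1) (n + 1) = -((z + 1) * altChoose z n) := by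
  linear_combination (n + 1 : R) * altChoose_add_one_succ z n + add_one_mul_altChoose_succ z n

lemma sum_altChoose_mul_sub (z : R) (v : ℕ → R) (N : ℕ) :
    ∑ n ∈ Finset.range N, altChoose z n * (v (n + 1) - v n) =
      altChoose z N * v N - ∑ n ∈ Finset.range (N + 1), altChoose (z + 1) n * v n := by
  induction N with
  | zero => simp [altChoose_zero_right]
  | succ N ih =>
    rw [Finset.sum_range_succ, ih, Finset.sum_range_succ _ (N + 1), altChoose_add_one_succ]
    ring

end Ring

lemma hasSum_altChoose_mul_pow (z : ℂ) {w : ℂ} (hw : ‖w‖ < 1) :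
    HasSum (fun n ↦ altChoose z n * w ^ n) ((1 - w) ^ z) := by
  have h := (Complex.one_add_cpow_hasFPowerSeriesOnBall_zero (a := z)).hasSum (y := -w)
    (by rw [← ENNReal.ofReal_one, Metric.eball_ofReal]; simpa using hw)
  simp only [zero_add] at h
  rw [← sub_eq_add_neg] at h
  refine h.congr_fun fun n ↦ ?_
  simp only [binomialSeries_apply, List.ofFn_const, List.prod_replicate, smul_eq_mul, altChoose,
    neg_pow w]
  ring

lemma sub_mul_rpow_neg_le {x s : ℝ} (hx : 0 < x) (hs : 0 ≤ s) (hs' : s ≤ 1) :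
    (x - s) * x ^ (-s) ≤ x * (x + 1) ^ (-s) := by
  have hbern := rpow_one_add_le_one_add_mul_self (s := 1 / x)
    (by linarith [one_div_pos.2 hx]) hs hs'
  rw [show 1 + 1 / x = (x + 1) / x by field_simp, Real.div_rpow (by positivity) hx.le,
    div_le_iff₀ (by positivity)] at hbern
  rw [Real.rpow_neg hx.le, Real.rpow_neg (by positivity), ← div_eq_mul_inv, ← div_eq_mul_inv,
    div_le_div_iff₀ (by positivity) (by positivity)]
  rcases le_total x s with hxs | hsx
  · exact (mul_nonpos_of_nonpos_of_nonneg (sub_nonpos.2 hxs) (by positivity)).trans (by positivity)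
  · calc (x - s) * (x + 1) ^ s ≤ (x - s) * ((1 + s * (1 / x)) * x ^ s) :=
          mul_le_mul_of_nonneg_left hbern (sub_nonneg.2 hsx)
      _ = (x - s ^ 2 / x) * x ^ s := by field_simp; ring
      _ ≤ x * x ^ s := by gcongr; exact sub_le_self _ (by positivity)

variable {z : ℂ} {r : ℝ}

lemma norm_altChoose_le (hz : ‖z‖ ≤ r) (hr : r ≤ 1) (n : ℕ) :
    ‖altChoose z n‖ ≤ ((n : ℝ) + 1) ^ (r - 1) := by
  have hr₀ : 0 ≤ r := (norm_nonneg z).trans hz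
  induction n with
  | zero => simp [altChoose_zero_right]
  | succ n ih =>
    have hn : (0 : ℝ) < n + 1 := by positivity
    have hnorm : ‖((n : ℂ) + 1)‖ = n + 1 := by exact_mod_cast Complex.norm_natCast (n + 1)
    have hsub : ‖(n : ℂ) - z‖ ≤ n + r :=
      (norm_sub_le _ _).trans (by rw [Complex.norm_natCast]; gcongr)
    have hstep := sub_mul_rpow_neg_le hn (sub_nonneg.2 hr) (by linarith)
    refine le_of_mul_le_mul_left ?_ hn
    calc ((n : ℝ) + 1) * ‖altChoose z (n + 1)‖ = ‖(n : ℂ) - z‖ * ‖altChoose z n‖ := by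
          rw [← hnorm, ← norm_mul, ← norm_mul, add_one_mul_altChoose_succ]
      _ ≤ (n + r) * ((n : ℝ) + 1) ^ (r - 1) := by gcongr
      _ ≤ (n + 1) * (((n + 1 : ℕ) : ℝ) + 1) ^ (r - 1) := by
          convert hstep using 2 <;> push_cast <;> ring_nf

lemma norm_altChoose_add_one_succ_le (hz : ‖z‖ ≤ r) (hr : r ≤ 1) (n : ℕ) :
    ‖altChoose (z + 1) (n + 1)‖ ≤ (r + 1) * ((n + 1 : ℕ) : ℝ) ^ (r - 2) := by
  have hn : (0 : ℝ) < n + 1 := by positivity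
  have hnorm : ‖((n : ℂ) + 1)‖ = n + 1 := by exact_mod_cast Complex.norm_natCast (n + 1)
  have hz₁ : ‖z + 1‖ ≤ r + 1 := (norm_add_le _ _).trans (by simpa using hz)
  refine le_of_mul_le_mul_left ?_ hn
  calc ((n : ℝ) + 1) * ‖altChoose (z + 1) (n + 1)‖ = ‖z + 1‖ * ‖altChoose z n‖ := by
        rw [← hnorm, ← norm_mul, add_one_mul_altChoose_add_one_succ, norm_neg, norm_mul]
    _ ≤ (r + 1) * ((n : ℝ) + 1) ^ (r - 1) := by
        gcongr
        · linarith [norm_nonneg z]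
        · exact norm_altChoose_le hz hr n
    _ = (n + 1) * ((r + 1) * ((n + 1 : ℕ) : ℝ) ^ (r - 2)) := by
        rw [show r - 1 = r - 2 + 1 by ring, Real.rpow_add_one hn.ne']
        push_cast
        ring

lemma summable_norm_altChoose_add_one (hz : ‖z‖ < 1) :
    Summable fun n ↦ ‖altChoose (z + 1) n‖ := by
  rw [← summable_nat_add_iff 1]
  refine .of_nonneg_of_le (fun n ↦ norm_nonneg _)
    (norm_altChoose_add_one_succ_le le_rfl hz.le) (.mul_left _ ?_)
  exact (summable_nat_add_iff 1).2 (Real.summable_nat_rpow.2 (by linarith))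

end AltChoose

section NewtonSeries

variable {z : ℂ} {r t : ℝ}

lemma summable_altChoose_add_one_mul_laguerre (hz : ‖z‖ < 1) (ht : 0 ≤ t) :
    Summable fun n ↦ altChoose (z + 1) n * ((laguerre n).eval t : ℝ) := by
  refine .of_norm_bounded ((summable_norm_altChoose_add_one hz).mul_right (Real.exp t)) fun n ↦ ?_
  rw [norm_mul, Complex.norm_real]
  gcongr
  exact abs_eval_laguerre_le n ht

lemma tendsto_altChoose_mul_laguerre (hz : ‖z‖ < 1) (ht : 0 ≤ t) :
    Tendsto (fun n ↦ altChoose z n * ((laguerre n).eval t : ℝ)) atTop (𝓝 0) := by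
  have hpow : Tendsto (fun n : ℕ ↦ ((n : ℝ) + 1) ^ (‖z‖ - 1) * Real.exp t) atTop (𝓝 0) := by
    simpa using ((tendsto_rpow_neg_atTop (sub_pos.2 hz)).comp
      (tendsto_natCast_atTop_atTop.atTop_add tendsto_const_nhds)).mul_const (Real.exp t)
  refine squeeze_zero_norm (fun n ↦ ?_) hpow
  rw [norm_mul, Complex.norm_real]
  gcongr
  · exact norm_altChoose_le le_rfl hz.le n
  · exact abs_eval_laguerre_le n ht

lemma norm_altChoose_mul_derivative_laguerre_le (hz : ‖z‖ ≤ r) (hr : r ≤ 1) (ht : 0 < t) (n : ℕ) :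
    ‖altChoose z n * ((derivative (laguerre n)).eval t : ℝ)‖ ≤
      ((n : ℝ) + 1) ^ (r - 1 / 2) * (Real.exp t / √t) := by
  have hn : (0 : ℝ) < n + 1 := by positivity
  rw [norm_mul, Complex.norm_real]
  calc ‖altChoose z n‖ * |(derivative (laguerre n)).eval t|
      ≤ ((n : ℝ) + 1) ^ (r - 1) * (√((n + 1 : ℝ) / t) * Real.exp t) := by
        gcongr
        · exact norm_altChoose_le hz hr n
        · refine (abs_eval_derivative_laguerre_le n ht).trans ?_
          gcongr
          linarith
    _ = ((n : ℝ) + 1) ^ (r - 1 / 2) * (Real.exp t / √t) := by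
        rw [show r - 1 / 2 = r - 1 + 1 / 2 by ring, Real.rpow_add hn, ← Real.sqrt_eq_rpow,
          Real.sqrt_div hn.le]
        ring

lemma norm_altChoose_add_one_mul_derivative_laguerre_le (hz : ‖z‖ ≤ r) (hr : r ≤ 1) (ht : 0 < t)
    (n : ℕ) :
    ‖altChoose (z + 1) n * ((derivative (laguerre n)).eval t : ℝ)‖ ≤
      (r + 1) * (n : ℝ) ^ (r - 3 / 2) * (Real.exp t / √t) := by
  have hr₀ : 0 ≤ r := (norm_nonneg z).trans hz
  cases n with
  | zero =>
    simp only [laguerre_zero, derivative_one, eval_zero, Complex.ofReal_zero, mul_zero, norm_zero]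
    positivity
  | succ n =>
    have hn : (0 : ℝ) < (n + 1 : ℕ) := by positivity
    rw [norm_mul, Complex.norm_real]
    calc ‖altChoose (z + 1) (n + 1)‖ * |(derivative (laguerre (n + 1))).eval t|
        ≤ (r + 1) * ((n + 1 : ℕ) : ℝ) ^ (r - 2) * (√((n + 1 : ℕ) / t) * Real.exp t) := by
          gcongr
          · exact norm_altChoose_add_one_succ_le hz hr n
          · exact abs_eval_derivative_laguerre_le _ ht
      _ = (r + 1) * ((n + 1 : ℕ) : ℝ) ^ (r - 3 / 2) * (Real.exp t / √t) := by
          rw [show r - 3 / 2 = r - 2 + 1 / 2 by ring, Real.rpow_add hn, ← Real.sqrt_eq_rpow,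
            Real.sqrt_div hn.le]
          ring

/-- The Newton series `∑ (-1) ^ n * C(z, n) * L_n(t)` in the variable `z`. As an unconditional sum
it is considered only at `z + 1` with `‖z‖ < 1`, where it converges absolutely. -/
noncomputable def laguerreNewtonSeries (z : ℂ) (t : ℝ) : ℂ :=
  ∑' n, altChoose z n * ((laguerre n).eval t : ℝ)

lemma hasDerivAt_laguerreNewtonSeries (hz : ‖z‖ < 1 / 2) (ht : 0 < t) :
    HasDerivAt (laguerreNewtonSeries (z + 1))
      (∑' n, altChoose (z + 1) n * ((derivative (laguerre n)).eval t : ℝ)) t := by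
  have ht' : t ∈ Ioo (t / 2) (t + 1) := ⟨by linarith, by linarith⟩
  refine hasDerivAt_tsum_of_isPreconnected
    (((Real.summable_nat_rpow.2 (by linarith : ‖z‖ - 3 / 2 < -1)).mul_left (‖z‖ + 1)).mul_right
      (Real.exp (t + 1) / √(t / 2))) isOpen_Ioo isPreconnected_Ioo
    (fun n s _ ↦ ((laguerre n).hasDerivAt s).ofReal_comp.const_mul _) (fun n s hs ↦ ?_) ht'
    (summable_altChoose_add_one_mul_laguerre (by linarith) ht.le) ht'
  refine (norm_altChoose_add_one_mul_derivative_laguerre_le le_rfl (by linarith)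
    ((half_pos ht).trans hs.1) n).trans ?_
  gcongr
  exacts [hs.2.le, hs.1.le]

lemma summable_altChoose_add_one_mul_derivative_laguerre (hz : ‖z‖ < 1 / 2) (ht : 0 < t) :
    Summable fun n ↦ altChoose (z + 1) n * ((derivative (laguerre n)).eval t : ℝ) :=
  .of_norm_bounded (((Real.summable_nat_rpow.2 (by linarith)).mul_left _).mul_right _) fun n ↦
    norm_altChoose_add_one_mul_derivative_laguerre_le le_rfl (by linarith) ht n

lemma mul_altChoose_add_one_mul_derivative_laguerre_succ (z : ℂ) (t : ℝ) (n : ℕ) :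
    t * (altChoose (z + 1) (n + 1) * ((derivative (laguerre (n + 1))).eval t : ℝ)) =
      -(z + 1) *
        (altChoose z n * (((laguerre (n + 1)).eval t : ℝ) - ((laguerre n).eval t : ℝ))) := by
  have h := congrArg (fun p ↦ ((p.eval t : ℝ) : ℂ)) (X_mul_derivative_laguerre_succ n)
  simp only [eval_mul, eval_sub, eval_add, eval_X, eval_one, eval_natCast] at h
  push_cast at h
  linear_combination altChoose (z + 1) (n + 1) * h +
    (((laguerre (n + 1)).eval t : ℝ) - ((laguerre n).eval t : ℝ)) *
      add_one_mul_altChoose_add_one_succ z n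

lemma mul_tsum_altChoose_mul_derivative_laguerre (hz : ‖z‖ < 1 / 2) (ht : 0 < t) :
    t * ∑' n, altChoose (z + 1) n * ((derivative (laguerre n)).eval t : ℝ) =
      (z + 1) * laguerreNewtonSeries (z + 1) t := by
  set L : ℕ → ℂ := fun n ↦ ((laguerre n).eval t : ℝ)
  set D : ℕ → ℂ := fun n ↦ ((derivative (laguerre n)).eval t : ℝ)
  have hpartial (N : ℕ) : t * ∑ n ∈ Finset.range (N + 1), altChoose (z + 1) n * D n =
      (z + 1) * (∑ n ∈ Finset.range (N + 1), altChoose (z + 1) n * L n - altChoose z N * L N) := by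
    rw [Finset.sum_range_succ', mul_add, Finset.mul_sum, Finset.sum_congr rfl fun n _ ↦
      mul_altChoose_add_one_mul_derivative_laguerre_succ z t n, ← Finset.mul_sum,
      sum_altChoose_mul_sub z L]
    simp only [D, laguerre_zero, derivative_one, eval_zero, Complex.ofReal_zero]
    ring
  have hleft := ((summable_altChoose_add_one_mul_derivative_laguerre hz ht).hasSum.tendsto_sum_nat
    |>.comp (tendsto_add_atTop_nat 1)).const_mul (t : ℂ)
  have hright := (((summable_altChoose_add_one_mul_laguerre (by linarith) ht.le).hasSum
    |>.tendsto_sum_nat.comp (tendsto_add_atTop_nat 1)).sub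
    (tendsto_altChoose_mul_laguerre (by linarith) ht.le)).const_mul (z + 1)
  rw [sub_zero] at hright
  exact tendsto_nhds_unique hleft (hright.congr fun N ↦ (hpartial N).symm)

lemma laguerreNewtonSeries_add_one_eq_mul_cpow (hz : ‖z‖ < 1 / 2) (ht : 0 < t) :
    laguerreNewtonSeries (z + 1) t = laguerreNewtonSeries (z + 1) 1 * (t : ℂ) ^ (z + 1) := by
  have hderiv (s : ℝ) (hs : 0 < s) : HasDerivAt
      (fun s : ℝ ↦ laguerreNewtonSeries (z + 1) s * (s : ℂ) ^ (-(z + 1))) 0 s := by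
    have hs' : (s : ℂ) ≠ 0 := Complex.ofReal_ne_zero.2 hs.ne'
    have hcpow : HasDerivAt (fun s : ℝ ↦ (s : ℂ) ^ (-(z + 1)))
        (-(z + 1) * (s : ℂ) ^ (-(z + 1) - 1) * 1) s :=
      ((hasDerivAt_id (s : ℂ)).cpow_const (.inl hs)).comp_ofReal
    refine ((hasDerivAt_laguerreNewtonSeries hz hs).mul hcpow).congr_deriv ?_
    have hode := mul_tsum_altChoose_mul_derivative_laguerre hz hs
    rw [Complex.cpow_sub _ _ hs', Complex.cpow_one]
    field_simp
    linear_combination (s : ℂ) ^ (-(z + 1)) * hode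
  have hconst := isOpen_Ioi.is_const_of_deriv_eq_zero isPreconnected_Ioi
    (fun s hs ↦ (hderiv s hs).differentiableAt.differentiableWithinAt)
    (fun s hs ↦ (hderiv s hs).deriv) (mem_Ioi.2 ht) (mem_Ioi.2 one_pos)
  have ht' : (t : ℂ) ^ (z + 1) ≠ 0 := by simp [Complex.cpow_eq_zero_iff, ht.ne']
  rwa [Complex.cpow_neg, Complex.ofReal_one, Complex.one_cpow, mul_one, ← div_eq_mul_inv,
    div_eq_iff ht'] at hconst

lemma integral_laguerreNewtonSeries_mul_exp_neg_mul (hz : ‖z‖ < 1) {s : ℝ} (hs : 1 < s) :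
    ∫ t in Ioi (0 : ℝ), laguerreNewtonSeries (z + 1) t * Complex.exp (-(s * t)) =
      (1 / s) ^ (z + 1) / s := by
  have hs₀ : 0 < s := one_pos.trans hs
  set F : ℕ → ℝ → ℂ := fun n t ↦
    altChoose (z + 1) n * ((laguerre n).eval t * Real.exp (-(s * t)) : ℝ)
  have hF (n : ℕ) : IntegrableOn (F n) (Ioi 0) :=
    (integrableOn_laguerre_mul_exp_neg_mul n hs₀).ofReal.const_mul _
  have hnorm (n : ℕ) : ∫ t in Ioi (0 : ℝ), ‖F n t‖ ≤ ‖altChoose (z + 1) n‖ * (1 / (s - 1)) := by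
    simp only [F, norm_mul (altChoose _ _), Complex.norm_real]
    rw [integral_const_mul]
    gcongr
    exact integral_norm_laguerre_mul_exp_neg_mul_le n hs
  have hsum := hasSum_integral_of_summable_integral_norm hF <|
    .of_nonneg_of_le (fun n ↦ integral_nonneg fun t ↦ norm_nonneg _) hnorm
      ((summable_norm_altChoose_add_one hz).mul_right _)
  have hint (n : ℕ) : ∫ t in Ioi (0 : ℝ), F n t =
      altChoose (z + 1) n * (1 - 1 / s : ℂ) ^ n * (1 / s) := by
    rw [integral_const_mul, integral_complex_ofReal, integral_laguerre_mul_exp_neg_mul n hs₀]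
    push_cast
    ring
  have hbinom : HasSum (fun n ↦ altChoose (z + 1) n * (1 - 1 / s : ℂ) ^ n * (1 / s))
      ((1 / s) ^ (z + 1) / s) := by
    have hw : ‖(1 - 1 / s : ℂ)‖ < 1 := by
      rw [← Complex.ofReal_one, ← Complex.ofReal_div, ← Complex.ofReal_sub, Complex.norm_real,
        Real.norm_eq_abs, abs_lt]
      have h₁ := one_div_pos.2 hs₀
      have h₂ := (div_lt_one hs₀).2 hs
      constructor <;> linarith
    simpa [div_eq_mul_inv] using (hasSum_altChoose_mul_pow (z + 1) hw).mul_right (1 / s : ℂ)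
  simp_rw [hint] at hsum
  rw [hbinom.unique hsum]
  refine setIntegral_congr_fun measurableSet_Ioi fun t _ ↦ ?_
  simp [laguerreNewtonSeries, F, ← tsum_mul_right, mul_assoc]

lemma laguerreNewtonSeries_add_one (hz : ‖z‖ < 1 / 2) (ht : 0 < t) :
    laguerreNewtonSeries (z + 1) t = (t : ℂ) ^ (z + 1) / Complex.Gamma (z + 2) := by
  have hre : 0 < (z + 2).re := by
    have := (abs_le.1 (Complex.abs_re_le_norm z)).1
    simp only [Complex.add_re, Complex.re_ofNat]
    linarith
  have hlaplace : ∫ t in Ioi (0 : ℝ), laguerreNewtonSeries (z + 1) t * Complex.exp (-(2 * t)) =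
      laguerreNewtonSeries (z + 1) 1 * ((1 / 2) ^ (z + 2) * Complex.Gamma (z + 2)) := by
    have hGamma := Complex.integral_cpow_mul_exp_neg_mul_Ioi hre two_pos
    rw [Complex.ofReal_ofNat, show z + 2 - 1 = z + 1 by ring] at hGamma
    rw [← hGamma, ← integral_const_mul]
    refine setIntegral_congr_fun measurableSet_Ioi fun t ht ↦ ?_
    simp only [laguerreNewtonSeries_add_one_eq_mul_cpow hz ht, mul_assoc]
  have hone : laguerreNewtonSeries (z + 1) 1 * Complex.Gamma (z + 2) = 1 := by
    have hpow : ((1 : ℂ) / 2) ^ (z + 2) = (1 / 2) ^ (z + 1) / 2 := by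
      rw [show z + 2 = z + 1 + 1 by ring, Complex.cpow_add _ _ (by simp), Complex.cpow_one]
      ring
    have hne : ((1 : ℂ) / 2) ^ (z + 1) / 2 ≠ 0 := by simp [Complex.cpow_eq_zero_iff]
    have h := integral_laguerreNewtonSeries_mul_exp_neg_mul (by linarith : ‖z‖ < 1) one_lt_two
    rw [Complex.ofReal_ofNat, hlaplace, hpow] at h
    exact mul_left_cancel₀ hne (by linear_combination h)
  rw [laguerreNewtonSeries_add_one_eq_mul_cpow hz ht,
    eq_div_iff (Complex.Gamma_ne_zero_of_re_pos hre)]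
  linear_combination (t : ℂ) ^ (z + 1) * hone

lemma tsum_altChoose_mul_derivative_laguerre (hz : ‖z‖ < 1 / 2) (ht : 0 < t) :
    ∑' n, altChoose (z + 1) n * ((derivative (laguerre n)).eval t : ℝ) =
      (t : ℂ) ^ z / Complex.Gamma (z + 1) := by
  have ht' : (t : ℂ) ≠ 0 := Complex.ofReal_ne_zero.2 ht.ne'
  have hz₁ : z + 1 ≠ 0 := fun h ↦ by
    rw [eq_neg_of_add_eq_zero_left h, norm_neg, norm_one] at hz
    linarith
  refine mul_left_cancel₀ ht' ?_
  rw [mul_tsum_altChoose_mul_derivative_laguerre hz ht, laguerreNewtonSeries_add_one hz ht,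
    show z + 2 = z + 1 + 1 by ring, Complex.Gamma_add_one _ hz₁, Complex.cpow_add _ _ ht',
    Complex.cpow_one]
  field_simp

lemma tendstoUniformlyOn_altChoose_mul_derivative_laguerre (hr : r < 1 / 2) (ht : 0 < t) :
    TendstoUniformlyOn (fun n (z : ℂ) ↦ altChoose z n * ((derivative (laguerre n)).eval t : ℝ)) 0
      atTop (Metric.closedBall 0 r) := by
  have hpow : Tendsto (fun n : ℕ ↦ ((n : ℝ) + 1) ^ (r - 1 / 2) * (Real.exp t / √t)) atTop
      (𝓝 0) := by
    simpa using ((tendsto_rpow_neg_atTop (sub_pos.2 hr)).comp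
      (tendsto_natCast_atTop_atTop.atTop_add tendsto_const_nhds)).mul_const (Real.exp t / √t)
  refine SeminormedAddGroup.tendstoUniformlyOn_zero.2 fun ε hε ↦ ?_
  filter_upwards [hpow.eventually_lt_const hε] with n hn z hz
  exact (norm_altChoose_mul_derivative_laguerre_le (mem_closedBall_zero_iff.1 hz)
    (by linarith) ht n).trans_lt hn

lemma tendstoUniformlyOn_sum_altChoose_mul_laguerre (hr : r < 1 / 2) (ht : 0 < t) :
    TendstoUniformlyOn
      (fun N (z : ℂ) ↦ ∑ n ∈ Finset.range N, altChoose z n * ((laguerre n).eval t : ℝ))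
      (fun z ↦ (t : ℂ) ^ z / Complex.Gamma (z + 1)) atTop (Metric.closedBall 0 r) := by
  set D : ℕ → ℂ := fun n ↦ ((derivative (laguerre n)).eval t : ℝ)
  have hD (n : ℕ) : D (n + 1) - D n = -((laguerre n).eval t : ℝ) := by
    simp [D, derivative_laguerre_succ]
  have hseries : TendstoUniformlyOn
      (fun N z ↦ ∑ n ∈ Finset.range (N + 1), altChoose (z + 1) n * D n)
      (fun z ↦ ∑' n, altChoose (z + 1) n * D n) atTop (Metric.closedBall 0 r) :=
    fun u hu ↦ (tendsto_add_atTop_nat 1).eventually <| tendstoUniformlyOn_tsum_nat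
      (((Real.summable_nat_rpow.2 (by linarith)).mul_left _).mul_right _) (fun n z hz ↦
        norm_altChoose_add_one_mul_derivative_laguerre_le (mem_closedBall_zero_iff.1 hz)
          (by linarith) ht n) u hu
  have hboundary := tendstoUniformlyOn_altChoose_mul_derivative_laguerre hr ht
  refine ((hseries.sub hboundary).congr (.of_forall fun N z _ ↦ ?_)).congr_right fun z hz ↦ ?_
  · have h := sum_altChoose_mul_sub z D N
    simp only [hD, mul_neg, Finset.sum_neg_distrib] at h
    simp only [Pi.sub_apply]
    linear_combination h
  · simpa using tsum_altChoose_mul_derivative_laguerre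
      ((mem_closedBall_zero_iff.1 hz).trans_lt hr) ht

end NewtonSeries

section TaylorCoefficients

lemma tendsto_coeff_of_tendstoLocallyUniformlyOn {ι : Type*} {l : Filter ι} {P : ι → ℂ[X]}
    {f : ℂ → ℂ} {U : Set ℂ} (hU : IsOpen U) (hU₀ : 0 ∈ U)
    (h : TendstoLocallyUniformlyOn (fun i z ↦ (P i).eval z) f l U) (k : ℕ) :
    Tendsto (fun i ↦ (P i).coeff k) l (𝓝 (iteratedDeriv k f 0 / k.factorial)) := by
  induction k generalizing P f with
  | zero => simpa [coeff_zero_eq_eval_zero] using h.tendsto_at hU₀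
  | succ k ih =>
    have hderiv : TendstoLocallyUniformlyOn (fun i z ↦ (derivative (P i)).eval z) (deriv f) l U :=
      (h.deriv (.of_forall fun i ↦ (P i).differentiableOn) hU).congr fun i z _ ↦ (P i).deriv
    have hk : (k : ℂ) + 1 ≠ 0 := Nat.cast_add_one_ne_zero k
    convert (ih hderiv).div_const ((k : ℂ) + 1) using 2
    · rw [coeff_derivative, mul_div_cancel_right₀ _ hk]
    · rw [iteratedDeriv_succ', Nat.factorial_succ, Nat.cast_mul, Nat.cast_succ, div_div, mul_comm]

lemma differentiable_cpow_div_Gamma_add_one {c : ℂ} (hc : c ≠ 0) :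
    Differentiable ℂ fun z ↦ c ^ z / Complex.Gamma (z + 1) :=
  (differentiable_id.const_cpow (.inl hc)).mul
    (Complex.differentiable_one_div_Gamma.comp (differentiable_id.add_const 1))

lemma coeff_descPochhammer (n k : ℕ) : (descPochhammer ℂ n).coeff k = stirlingFirst n k := by
  rw [← descPochhammer_map (Int.castRingHom ℂ), coeff_map]
  simp [stirlingFirst]

lemma altChoose_eq_eval_descPochhammer (z : ℂ) (n : ℕ) :
    altChoose z n = (-1) ^ n / n.factorial * (descPochhammer ℂ n).eval z := by
  rw [altChoose, Ring.choose_eq_smul, ← aeval_eq_smeval, ← descPochhammer_map (Int.castRingHom ℂ),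
    eval_map, aeval_def, algebraMap_int_eq, smul_eq_mul]
  ring

/-- The partial sums of the Newton series with Laguerre coefficients `L_n(t)`, as polynomials in the
variable `z` of the Newton series. -/
noncomputable def laguerreNewtonPartialSum (t : ℝ) (N : ℕ) : ℂ[X] :=
  ∑ n ∈ Finset.range N,
    C ((-1) ^ n * ((laguerre n).eval t : ℝ) / n.factorial : ℂ) * descPochhammer ℂ n

lemma eval_laguerreNewtonPartialSum (t : ℝ) (N : ℕ) (z : ℂ) :
    (laguerreNewtonPartialSum t N).eval z =
      ∑ n ∈ Finset.range N, altChoose z n * ((laguerre n).eval t : ℝ) := by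
  simp only [laguerreNewtonPartialSum, eval_finsetSum, eval_mul, eval_C,
    altChoose_eq_eval_descPochhammer]
  exact Finset.sum_congr rfl fun n _ ↦ by ring

lemma coeff_laguerreNewtonPartialSum (t : ℝ) (N k : ℕ) :
    (laguerreNewtonPartialSum t N).coeff k = (∑ n ∈ Finset.range N,
      (-1) ^ n * stirlingFirst n k * (laguerre n).eval t / n.factorial : ℝ) := by
  simp only [laguerreNewtonPartialSum, finsetSum_coeff, coeff_C_mul, coeff_descPochhammer]
  push_cast
  exact Finset.sum_congr rfl fun n _ ↦ by ring

end TaylorCoefficients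

-- At the poles of `Γ`, Lean's `x / 0 = 0` is the value of the entire function `t ^ z / Γ(z + 1)`.
theorem reciprocal_gamma_taylor_series_general {t : ℝ} (ht : 0 < t) :
    ∃ a : ℕ → ℝ,
      (∀ k, Tendsto (fun N ↦ ∑ n ∈ Finset.range N,
        (-1) ^ n * stirlingFirst n k * (laguerre n).eval t / n.factorial) atTop (𝓝 (a k))) ∧
      ∀ z : ℂ, HasSum (fun k ↦ a k * z ^ k) ((t : ℂ) ^ z / Complex.Gamma (z + 1)) := by
  set h : ℂ → ℂ := fun z ↦ (t : ℂ) ^ z / Complex.Gamma (z + 1)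
  have huniform : TendstoLocallyUniformlyOn (fun N z ↦ (laguerreNewtonPartialSum t N).eval z) h
      atTop (Metric.ball 0 (1 / 4)) := by
    simp only [eval_laguerreNewtonPartialSum]
    exact ((tendstoUniformlyOn_sum_altChoose_mul_laguerre (by norm_num) ht).mono
      Metric.ball_subset_closedBall).tendstoLocallyUniformlyOn
  have hcoeff (k : ℕ) := tendsto_coeff_of_tendstoLocallyUniformlyOn Metric.isOpen_ball
    (Metric.mem_ball_self (by norm_num)) huniform k
  simp only [coeff_laguerreNewtonPartialSum] at hcoeff
  have hre (k : ℕ) := (Complex.continuous_re.tendsto _).comp (hcoeff k)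
  refine ⟨_, hre, fun z ↦ ?_⟩
  have hreal (k : ℕ) := tendsto_nhds_unique ((Complex.continuous_ofReal.tendsto _).comp (hre k))
    (hcoeff k)
  have hentire : Differentiable ℂ h :=
    differentiable_cpow_div_Gamma_add_one (Complex.ofReal_ne_zero.2 ht.ne')
  refine (Complex.hasSum_taylorSeries_of_entire hentire 0 z).congr_fun fun k ↦ ?_
  rw [hreal, sub_zero, smul_eq_mul, smul_eq_mul]
  ring

theorem reciprocal_gamma_taylor_series :
    ∃ a : ℕ → ℝ,
      (∀ k : ℕ,
        Filter.Tendsto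
          (fun N => ∑ n ∈ Finset.range N,
            (-1) ^ n * stirlingFirst n k * laguerreOne n / (Nat.factorial n : ℝ))
          Filter.atTop (nhds (a k))) ∧
      (∀ x : ℝ, 0 < x →
        Filter.Tendsto (fun K => ∑ k ∈ Finset.range K, a k * x ^ k)
          Filter.atTop (nhds (1 / Real.Gamma (x + 1)))) := by
  obtain ⟨a, hcoeff, hsum⟩ := reciprocal_gamma_taylor_series_general one_pos
  simp only [eval_one_laguerre] at hcoeff
  refine ⟨a, hcoeff, fun x _ ↦ HasSum.tendsto_sum_nat (Complex.hasSum_ofReal.1 ?_)⟩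
  simpa [← Complex.Gamma_ofReal] using hsum x
end

section
/- For every real number x > 0, the series ∑_{n=2}^∞ ∫_0^∞ C(x,n) · (e^{-t}/t) · (e^{-t} - 1)^{n-1} dt converges (each integral existing), and its sum equals -ln Γ(x+1), where Γ is the real Gamma function. -/
/-- The generalized binomial coefficient `C(x, n) = x (x-1) ⋯ (x-n+1) / n!`. -/
noncomputable def genBinom (x : ℝ) (n : ℕ) : ℝ :=
  (∏ i ∈ Finset.range n, (x - i)) / (Nat.factorial n : ℝ)

/-!
By the binomial series for `(e⁻ᵗ)ˣ = (1 + (e⁻ᵗ - 1))ˣ`, the integrands add up to minus Malmsten's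
integrand. Since `|e⁻ᵗ - 1| ≤ t`, the `n`-th integral is `O(|C(x, n)| / n)`, which is summable for
`x > -1` because `C(x, n) / (n + 1) = C(x + 1, n + 1) / (x + 1)`; so sum and integral may be
exchanged. The integral of Malmsten's integrand is then identified with `log Γ` by the
Bohr–Mollerup theorem: convexity in `z` holds pointwise in `t`, and the functional equation is
Frullani's integral for `e⁻ᵗ`.
-/

open MeasureTheory Filter Set
open scoped Topology

section General

lemma tendsto_sum_Icc_of_hasSum_add {M : Type*} [AddCommMonoid M] [TopologicalSpace M]
    {f : ℕ → M} {a : M} {k : ℕ} (h : HasSum (fun n ↦ f (n + k)) a) :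
    Tendsto (fun N ↦ ∑ n ∈ Finset.Icc k N, f n) atTop (𝓝 a) := by
  have hN : Tendsto (fun N ↦ N + 1 - k) atTop atTop :=
    (tendsto_sub_atTop_nat k).comp (tendsto_add_atTop_nat 1)
  refine (h.tendsto_sum_nat.comp hN).congr fun N ↦ ?_
  simp only [Function.comp_apply, ← Finset.Ico_add_one_right_eq_Icc,
    Finset.sum_Ico_eq_sum_range, add_comm k]

lemma summable_of_le_sub_succ {f g : ℕ → ℝ} (hf : ∀ n, 0 ≤ f n) (hg : ∀ n, 0 ≤ g n)
    (h : ∀ n, f n ≤ g n - g (n + 1)) : Summable f := by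
  refine summable_of_sum_range_le (c := g 0) hf fun N ↦ ?_
  calc ∑ n ∈ Finset.range N, f n ≤ ∑ n ∈ Finset.range N, (g n - g (n + 1)) :=
        Finset.sum_le_sum fun n _ ↦ h n
    _ = g 0 - g N := Finset.sum_range_sub' g N
    _ ≤ g 0 := sub_le_self _ (hg N)

variable {α : Type*} [MeasurableSpace α] {μ : Measure α}

lemma integrable_of_hasSum_of_summable_integral_norm {ι E : Type*} [Countable ι]
    [NormedAddCommGroup E] {F : ι → α → E} {f : α → E} (hF : ∀ i, Integrable (F i) μ)
    (hsum : Summable fun i ↦ ∫ a, ‖F i a‖ ∂μ) (hFf : ∀ᵐ a ∂μ, HasSum (F · a) (f a)) :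
    Integrable f μ := by
  have hmeas : AEStronglyMeasurable f μ :=
    aestronglyMeasurable_of_tendsto_ae atTop
      (fun s : Finset ι ↦ s.aestronglyMeasurable_fun_sum fun i _ ↦ (hF i).1)
      (by simpa [HasSum] using hFf)
  refine ⟨hmeas, ?_⟩
  have hterm (i : ι) : ∫⁻ a, ‖F i a‖ₑ ∂μ = ENNReal.ofReal (∫ a, ‖F i a‖ ∂μ) :=
    (ofReal_integral_norm_eq_lintegral_enorm (hF i)).symm
  calc ∫⁻ a, ‖f a‖ₑ ∂μ ≤ ∫⁻ a, ∑' i, ‖F i a‖ₑ ∂μ := by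
        refine lintegral_mono_ae ?_
        filter_upwards [hFf] with a ha
        exact ha.tsum_eq ▸ enorm_tsum_le_tsum_enorm
    _ = ∑' i, ENNReal.ofReal (∫ a, ‖F i a‖ ∂μ) := by
        rw [lintegral_tsum fun i ↦ (hF i).1.enorm]
        simp only [hterm]
    _ < ⊤ := hsum.tsum_ofReal_lt_top

lemma convexOn_integral {E : Type*} [AddCommMonoid E] [SMul ℝ E] {s : Set E} {f : E → α → ℝ}
    (hs : Convex ℝ s) (hf : ∀ᵐ a ∂μ, ConvexOn ℝ s (f · a)) (hint : ∀ x ∈ s, Integrable (f x) μ) :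
    ConvexOn ℝ s fun x ↦ ∫ a, f x a ∂μ := by
  refine ⟨hs, fun x hx y hy p q hp hq hpq ↦ ?_⟩
  have hpx : Integrable (fun a ↦ p • f x a) μ := (hint x hx).smul p
  have hqy : Integrable (fun a ↦ q • f y a) μ := (hint y hy).smul q
  rw [← integral_smul, ← integral_smul, ← integral_add hpx hqy]
  refine integral_mono_ae (hint _ (hs hx hy hp hq hpq)) (hpx.add hqy) ?_
  filter_upwards [hf] with a ha
  exact ha.2 hx hy hp hq hpq

end General

lemma genBinom_zero (x : ℝ) : genBinom x 0 = 1 := by simp [genBinom]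

lemma genBinom_one (x : ℝ) : genBinom x 1 = x := by simp [genBinom]

lemma genBinom_succ_mul (x : ℝ) (n : ℕ) :
    genBinom x (n + 1) * (n + 1) = genBinom x n * (x - n) := by
  simp only [genBinom, Finset.prod_range_succ, Nat.factorial_succ]
  push_cast
  field_simp

lemma genBinom_add_one_succ_mul (x : ℝ) (n : ℕ) :
    genBinom (x + 1) (n + 1) * (n + 1) = (x + 1) * genBinom x n := by
  simp only [genBinom, Finset.prod_range_succ', Nat.factorial_succ]
  push_cast
  simp only [add_sub_add_right_eq_sub, sub_zero]
  field_simp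

lemma genBinom_eq_choose (x : ℝ) (n : ℕ) : genBinom x n = Ring.choose x n := by
  induction n with
  | zero => rw [genBinom_zero, Ring.choose_zero_right]
  | succ n ih =>
    have h := Ring.choose_smul_choose x (Nat.le_add_right n 1)
    simp only [Nat.choose_succ_self_right, add_tsub_cancel_left, Ring.choose_one_right,
      nsmul_eq_mul, Nat.cast_add, Nat.cast_one] at h
    refine mul_right_cancel₀ (n.cast_add_one_ne_zero (R := ℝ)) ?_
    rw [genBinom_succ_mul, ih, ← h, mul_comm]

lemma hasSum_genBinom_mul_pow (x : ℝ) {u : ℝ} (hu : |u| < 1) :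
    HasSum (fun n ↦ genBinom x n * u ^ n) ((1 + u) ^ x) := by
  have hmem : u ∈ Metric.eball (0 : ℝ) 1 := by
    rw [← ENNReal.ofReal_one, Metric.eball_ofReal]
    simpa using hu
  simpa [binomialSeries, genBinom_eq_choose, mul_comm] using
    (Real.one_add_rpow_hasFPowerSeriesOnBall_zero (a := x)).hasSum hmem

/-- Once `n ≥ x`, the recurrence for `C(x, n)` reads
`x |C(x, n)| = n |C(x, n)| - (n + 1) |C(x, n + 1)|`, so the tail telescopes. -/
lemma summable_abs_genBinom {x : ℝ} (hx : 0 < x) : Summable fun n ↦ |genBinom x n| := by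
  obtain ⟨M, hM⟩ := exists_nat_ge x
  rw [← summable_nat_add_iff M, ← summable_mul_left_iff hx.ne']
  refine summable_of_le_sub_succ (g := fun n ↦ ((n + M : ℕ) : ℝ) * |genBinom x (n + M)|)
    (fun n ↦ by positivity) (fun n ↦ by positivity) fun n ↦ le_of_eq ?_
  have hn : x ≤ ((n + M : ℕ) : ℝ) := hM.trans (Nat.cast_le.2 (Nat.le_add_left M n))
  have hrec := congrArg abs (genBinom_succ_mul x (n + M))
  rw [abs_mul, abs_mul, abs_of_pos (Nat.cast_add_one_pos (α := ℝ) (n + M)),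
    abs_of_nonpos (sub_nonpos.2 hn)] at hrec
  rw [add_right_comm n 1 M, Nat.cast_add_one]
  linarith

lemma summable_abs_genBinom_div {x : ℝ} (hx : -1 < x) :
    Summable fun n : ℕ ↦ |genBinom x n| / (n + 1) := by
  have hx1 : 0 < x + 1 := by linarith
  have hshift := (summable_nat_add_iff 1).2 (summable_abs_genBinom hx1)
  refine (hshift.div_const (x + 1)).congr fun n ↦ ?_
  have hn : 0 < (n : ℝ) + 1 := n.cast_add_one_pos
  have h := congrArg abs (genBinom_add_one_succ_mul x n)
  rw [abs_mul, abs_mul, abs_of_pos hx1, abs_of_pos hn] at h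
  rw [div_eq_div_iff hx1.ne' hn.ne', h, mul_comm]

lemma one_sub_exp_neg_mem_Ioo {t : ℝ} (ht : 0 < t) : 1 - Real.exp (-t) ∈ Ioo 0 1 :=
  ⟨by simpa using ht, by simpa using Real.exp_pos (-t)⟩

lemma hasDerivAt_one_sub_exp_neg_pow (n : ℕ) (t : ℝ) :
    HasDerivAt (fun t ↦ (1 - Real.exp (-t)) ^ (n + 1) / (n + 1))
      (Real.exp (-t) * (1 - Real.exp (-t)) ^ n) t := by
  have h := ((((hasDerivAt_neg t).exp).const_sub 1).pow (n + 1)).div_const ((n : ℝ) + 1)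
  refine h.congr_deriv ?_
  push_cast
  field_simp

lemma tendsto_one_sub_exp_neg_pow (n : ℕ) :
    Tendsto (fun t ↦ (1 - Real.exp (-t)) ^ (n + 1) / ((n : ℝ) + 1)) atTop (𝓝 (1 / (n + 1))) := by
  simpa using ((Real.tendsto_exp_neg_atTop_nhds_zero.const_sub 1).pow (n + 1)).div_const
    ((n : ℝ) + 1)

lemma integrableOn_exp_neg_mul_one_sub_exp_neg_pow (n : ℕ) :
    IntegrableOn (fun t ↦ Real.exp (-t) * (1 - Real.exp (-t)) ^ n) (Ioi 0) := by
  refine integrableOn_Ioi_deriv_of_nonneg' (fun t _ ↦ hasDerivAt_one_sub_exp_neg_pow n t)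
    (fun t ht ↦ ?_) (tendsto_one_sub_exp_neg_pow n)
  exact mul_nonneg (Real.exp_pos _).le (pow_nonneg (one_sub_exp_neg_mem_Ioo ht).1.le n)

lemma integral_exp_neg_mul_one_sub_exp_neg_pow (n : ℕ) :
    ∫ t in Ioi (0 : ℝ), Real.exp (-t) * (1 - Real.exp (-t)) ^ n = 1 / (n + 1) := by
  simpa using integral_Ioi_of_hasDerivAt_of_tendsto'
    (fun t _ ↦ hasDerivAt_one_sub_exp_neg_pow n t)
    (integrableOn_exp_neg_mul_one_sub_exp_neg_pow n) (tendsto_one_sub_exp_neg_pow n)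

/-- The integrand of the `n`-th term of Hermite's series for `-log Γ(x + 1)`. The series starts at
`n = 2`, so the truncation in `n - 1` is harmless. -/
noncomputable def hermiteTerm (x : ℝ) (n : ℕ) (t : ℝ) : ℝ :=
  genBinom x n * (Real.exp (-t) / t) * (Real.exp (-t) - 1) ^ (n - 1)

/-- The integrand in Malmsten's formula for `log Γ(z)`, with the factor `e⁻ᵗ / t` pulled out. -/
noncomputable def malmstenIntegrand (z t : ℝ) : ℝ :=
  Real.exp (-t) / t * (z - 1 - (1 - Real.exp (-((z - 1) * t))) / (1 - Real.exp (-t)))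

lemma hasSum_hermiteTerm (x : ℝ) {t : ℝ} (ht : 0 < t) :
    HasSum (fun n ↦ hermiteTerm x (n + 2) t) (-malmstenIntegrand (x + 1) t) := by
  obtain ⟨hv0, hv1⟩ := one_sub_exp_neg_mem_Ioo ht
  set u := Real.exp (-t) - 1 with hu
  have hu0 : u < 0 := by linarith
  have hune : u ≠ 0 := hu0.ne
  have hsum : HasSum (fun n ↦ genBinom x n * u ^ n) (Real.exp (-(x * t))) := by
    have h := hasSum_genBinom_mul_pow x (u := u) (by rw [abs_of_neg hu0]; linarith)
    rwa [hu, add_sub_cancel, ← Real.exp_mul, neg_mul, mul_comm t] at h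
  have htail := ((hasSum_nat_add_iff' 2).2 hsum).mul_left (Real.exp (-t) / t / u)
  convert! htail using 1
  · ext n
    simp only [hermiteTerm, ← hu, Nat.add_one_sub_one, pow_succ]
    field_simp
  · have hv : 1 - Real.exp (-t) = -u := by linarith
    simp only [malmstenIntegrand, add_sub_cancel_right, hv, Finset.sum_range_succ,
      Finset.sum_range_zero, genBinom_zero, genBinom_one]
    field_simp
    ring

lemma norm_hermiteTerm_le (x : ℝ) (n : ℕ) {t : ℝ} (ht : 0 < t) :
    ‖hermiteTerm x (n + 2) t‖ ≤
      |genBinom x (n + 2)| * (Real.exp (-t) * (1 - Real.exp (-t)) ^ n) := by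
  have hv := (one_sub_exp_neg_mem_Ioo ht).1
  have hvt : (1 - Real.exp (-t)) / t ≤ 1 :=
    (div_le_one ht).2 (by linarith [Real.one_sub_le_exp_neg t])
  calc ‖hermiteTerm x (n + 2) t‖
      = |genBinom x (n + 2)| * (Real.exp (-t) / t) * (1 - Real.exp (-t)) ^ (n + 1) := by
        rw [hermiteTerm, norm_mul, norm_mul, norm_pow, norm_sub_rev, Real.norm_of_nonneg hv.le,
          Real.norm_of_nonneg (by positivity : 0 ≤ Real.exp (-t) / t), Real.norm_eq_abs,
          Nat.add_one_sub_one]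
    _ = |genBinom x (n + 2)| * (Real.exp (-t) * (1 - Real.exp (-t)) ^ n) *
          ((1 - Real.exp (-t)) / t) := by ring
    _ ≤ |genBinom x (n + 2)| * (Real.exp (-t) * (1 - Real.exp (-t)) ^ n) :=
        mul_le_of_le_one_right (by positivity) hvt

lemma integrableOn_hermiteTerm (x : ℝ) (n : ℕ) : IntegrableOn (hermiteTerm x (n + 2)) (Ioi 0) := by
  refine Integrable.mono'
    ((integrableOn_exp_neg_mul_one_sub_exp_neg_pow n).const_mul |genBinom x (n + 2)|) ?_
    (ae_restrict_of_forall_mem measurableSet_Ioi fun t ht ↦ norm_hermiteTerm_le x n ht)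
  unfold hermiteTerm
  exact (by fun_prop : Measurable _).aestronglyMeasurable

lemma integral_norm_hermiteTerm_le (x : ℝ) (n : ℕ) :
    ∫ t in Ioi (0 : ℝ), ‖hermiteTerm x (n + 2) t‖ ≤ |genBinom x (n + 2)| / (n + 1) := by
  calc ∫ t in Ioi (0 : ℝ), ‖hermiteTerm x (n + 2) t‖
      ≤ ∫ t in Ioi (0 : ℝ), |genBinom x (n + 2)| * (Real.exp (-t) * (1 - Real.exp (-t)) ^ n) :=
        setIntegral_mono_on (integrableOn_hermiteTerm x n).norm
          ((integrableOn_exp_neg_mul_one_sub_exp_neg_pow n).const_mul _) measurableSet_Ioi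
          fun t ht ↦ norm_hermiteTerm_le x n ht
    _ = |genBinom x (n + 2)| / (n + 1) := by
        rw [integral_const_mul, integral_exp_neg_mul_one_sub_exp_neg_pow, mul_one_div]

lemma summable_integral_norm_hermiteTerm {x : ℝ} (hx : -1 < x) :
    Summable fun n ↦ ∫ t in Ioi (0 : ℝ), ‖hermiteTerm x (n + 2) t‖ := by
  have hs := ((summable_nat_add_iff 2).2 (summable_abs_genBinom_div hx)).mul_left 3
  refine hs.of_nonneg_of_le (fun n ↦ integral_nonneg fun t ↦ norm_nonneg _) fun n ↦
    (integral_norm_hermiteTerm_le x n).trans ?_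
  have hn : ((n + 2 : ℕ) : ℝ) + 1 ≤ 3 * (n + 1) := by
    push_cast
    linarith [n.cast_nonneg (α := ℝ)]
  rw [← mul_div_assoc, div_le_div_iff₀ (by positivity) (by positivity)]
  calc |genBinom x (n + 2)| * (((n + 2 : ℕ) : ℝ) + 1)
      ≤ |genBinom x (n + 2)| * (3 * (n + 1)) := by gcongr
    _ = 3 * |genBinom x (n + 2)| * (n + 1) := by ring

lemma integrableOn_malmstenIntegrand {z : ℝ} (hz : 0 < z) :
    IntegrableOn (malmstenIntegrand z) (Ioi 0) := by
  refine integrable_neg_iff.1 (integrable_of_hasSum_of_summable_integral_norm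
    (integrableOn_hermiteTerm (z - 1)) (summable_integral_norm_hermiteTerm (by linarith)) ?_)
  refine ae_restrict_of_forall_mem measurableSet_Ioi fun t ht ↦ ?_
  simpa using hasSum_hermiteTerm (z - 1) ht

lemma convexOn_malmstenIntegrand {t : ℝ} (ht : 0 < t) :
    ConvexOn ℝ univ (malmstenIntegrand · t) := by
  have hv := (one_sub_exp_neg_mem_Ioo ht).1
  have hexp : ConvexOn ℝ univ fun z ↦ Real.exp (-((z - 1) * t)) := by
    simpa [Function.comp_def, AffineMap.lineMap_apply_ring, ← neg_mul] using
      convexOn_exp.comp_affineMap (AffineMap.lineMap t 0)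
  have hlin : ConvexOn ℝ univ fun z : ℝ ↦ z := convexOn_id convex_univ
  refine (((hlin.add_const (-1)).add ((hexp.add_const (-1)).smul (inv_nonneg.2 hv.le))).smul
    (by positivity : 0 ≤ Real.exp (-t) / t)).congr fun z _ ↦ ?_
  simp only [malmstenIntegrand, Pi.add_apply, smul_eq_mul]
  ring

lemma malmstenIntegrand_add_one_sub (z : ℝ) {t : ℝ} (ht : 0 < t) :
    malmstenIntegrand (z + 1) t - malmstenIntegrand z t =
      t⁻¹ * (Real.exp (-t) - Real.exp (-(z * t))) := by
  have hv := (one_sub_exp_neg_mem_Ioo ht).1.ne'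
  have hexp : Real.exp (-(z * t)) = Real.exp (-((z - 1) * t)) * Real.exp (-t) := by
    rw [← Real.exp_add]
    ring_nf
  simp only [malmstenIntegrand, add_sub_cancel_right, hexp]
  field_simp
  ring

lemma integral_malmstenIntegrand_add_one {z : ℝ} (hz : 0 < z) :
    ∫ t in Ioi (0 : ℝ), malmstenIntegrand (z + 1) t =
      Real.log z + ∫ t in Ioi (0 : ℝ), malmstenIntegrand z t := by
  have hz' := integrableOn_malmstenIntegrand (add_pos hz one_pos)
  have hdiff : EqOn (fun t ↦ malmstenIntegrand (z + 1) t - malmstenIntegrand z t)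
      (fun t ↦ t⁻¹ • (Real.exp (-(1 * t)) - Real.exp (-(z * t)))) (Ioi 0) := fun t ht ↦ by
    simpa using malmstenIntegrand_add_one_sub z ht
  have hcont : Continuous fun s : ℝ ↦ Real.exp (-s) := by fun_prop
  have hfrullani : ∫ t in Ioi (0 : ℝ), t⁻¹ • (Real.exp (-(1 * t)) - Real.exp (-(z * t))) =
      Real.log (z / 1) • (1 - 0) :=
    Frullani.integral_Ioi_eq (f := fun s ↦ Real.exp (-s))
      (hcont.locallyIntegrable.locallyIntegrableOn _) one_pos hz
      ((hcont.tendsto' 0 1 (by simp)).mono_left nhdsWithin_le_nhds)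
      Real.tendsto_exp_neg_atTop_nhds_zero
      ((integrableOn_congr_fun hdiff measurableSet_Ioi).1
        (hz'.sub (integrableOn_malmstenIntegrand hz)))
  rw [← setIntegral_congr_fun measurableSet_Ioi hdiff,
    integral_sub hz' (integrableOn_malmstenIntegrand hz)] at hfrullani
  simpa [sub_eq_iff_eq_add] using hfrullani

theorem integral_malmstenIntegrand {z : ℝ} (hz : 0 < z) :
    ∫ t in Ioi (0 : ℝ), malmstenIntegrand z t = Real.log (Real.Gamma z) := by
  let J (y : ℝ) : ℝ := ∫ t in Ioi (0 : ℝ), malmstenIntegrand y t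
  have hconvex : ConvexOn ℝ (Ioi 0) J :=
    convexOn_integral (convex_Ioi 0)
      (ae_restrict_of_forall_mem measurableSet_Ioi fun t ht ↦
        (convexOn_malmstenIntegrand ht).subset (subset_univ _) (convex_Ioi 0))
      fun y hy ↦ integrableOn_malmstenIntegrand hy
  have hfeq {y : ℝ} (hy : 0 < y) : Real.exp (J (y + 1)) = y * Real.exp (J y) := by
    rw [show J (y + 1) = Real.log y + J y from integral_malmstenIntegrand_add_one hy,
      Real.exp_add, Real.exp_log hy]
  have hone : Real.exp (J 1) = 1 := by simp [J, malmstenIntegrand]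
  have hGamma : EqOn (fun y ↦ Real.exp (J y)) Real.Gamma (Ioi 0) :=
    Real.eq_Gamma_of_log_convex (by simpa [Function.comp_def] using hconvex) hfeq
      (fun _ ↦ Real.exp_pos _) hone
  rw [← hGamma hz, Real.log_exp]

lemma hasSum_integral_hermiteTerm {x : ℝ} (hx : -1 < x) :
    HasSum (fun n ↦ ∫ t in Ioi (0 : ℝ), hermiteTerm x (n + 2) t)
      (-Real.log (Real.Gamma (x + 1))) := by
  rw [← integral_malmstenIntegrand (by linarith : 0 < x + 1), ← integral_neg,
    ← setIntegral_congr_fun measurableSet_Ioi fun t ht ↦ (hasSum_hermiteTerm x ht).tsum_eq]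
  exact hasSum_integral_of_summable_integral_norm (integrableOn_hermiteTerm x)
    (summable_integral_norm_hermiteTerm hx)

theorem hermite_series_log_gamma_general (x : ℝ) (hx : -1 < x) :
    (∀ n : ℕ, 2 ≤ n →
      MeasureTheory.IntegrableOn
        (fun t : ℝ => genBinom x n * (Real.exp (-t) / t) * (Real.exp (-t) - 1) ^ (n - 1))
        (Set.Ioi 0)) ∧
    Filter.Tendsto
      (fun N => ∑ n ∈ Finset.Icc 2 N,
        ∫ t in Set.Ioi (0 : ℝ),
          genBinom x n * (Real.exp (-t) / t) * (Real.exp (-t) - 1) ^ (n - 1))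
      Filter.atTop (nhds (-Real.log (Real.Gamma (x + 1)))) := by
  refine ⟨fun n hn ↦ ?_, tendsto_sum_Icc_of_hasSum_add (hasSum_integral_hermiteTerm hx)⟩
  obtain ⟨m, rfl⟩ := Nat.exists_eq_add_of_le' hn
  exact integrableOn_hermiteTerm x m

theorem hermite_series_log_gamma (x : ℝ) (hx : 0 < x) :
    (∀ n : ℕ, 2 ≤ n →
      MeasureTheory.IntegrableOn
        (fun t : ℝ => genBinom x n * (Real.exp (-t) / t) * (Real.exp (-t) - 1) ^ (n - 1))
        (Set.Ioi 0)) ∧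
    Filter.Tendsto
      (fun N => ∑ n ∈ Finset.Icc 2 N,
        ∫ t in Set.Ioi (0 : ℝ),
          genBinom x n * (Real.exp (-t) / t) * (Real.exp (-t) - 1) ^ (n - 1))
      Filter.atTop (nhds (-Real.log (Real.Gamma (x + 1)))) :=
  hermite_series_log_gamma_general x (by linarith)
end
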